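/- Let s, t ∈ ℝ, u, v ∈ ℂ, c ∈ ℝ, and set X = [[si, u],[−ū, −si]], Y = [[ti, v],[−v̄, −ti]] (elements of 𝔨) and a = diag(e^c, e^{−c}). Then ρ_𝔟(a⁻¹ Y a) = (e^{−2c} − e^{2c})·v·E where E = [[0,1],[0,0]], a·ρ_𝔟(a⁻¹ Y a)·a⁻¹ = (1 − e^{4c})·v·E, and ⟨X, a·ρ_𝔟(a⁻¹ Y a)·a⁻¹⟩ = 2(e^{4c} − 1)·Im(ū v). (This is the computation evaluating the Poisson–Lie tensor π̂_{B_ε} at the point a = exp(ελ H) of the dressing orbit, with c = ελ.) -/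

import Mathlib

/-!
Conjugating `Y` by `a⁻¹` fixes its diagonal, scales `v` by `e^{-2c}` and `-v̄` by `e^{2c}`. The
lower-left entry and the imaginary diagonal determine the `𝔨`-part, whose upper-right entry is
`e^{2c} v`; so the `𝔟`-part is `(e^{-2c} - e^{2c}) v E`. Conjugating back by `a` scales `E` by
`e^{2c}`, and `tr (X E)` is the lower-left entry `-ū` of `X`.
-/

open Matrix

/-- The projection `ρ_𝔨` onto `𝔨` in the decomposition `𝔰𝔩₂(ℂ) = 𝔨 ⊕ 𝔟`
(for traceless matrices). -/
noncomputable def rhoK (Z : Matrix (Fin 2) (Fin 2) ℂ) : Matrix (Fin 2) (Fin 2) ℂ :=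
  !![((Z 0 0).im : ℂ) * Complex.I, -(starRingEnd ℂ) (Z 1 0);
     Z 1 0, -((Z 0 0).im : ℂ) * Complex.I]

/-- The projection `ρ_𝔟` onto `𝔟` in the decomposition `𝔰𝔩₂(ℂ) = 𝔨 ⊕ 𝔟`
(for traceless matrices). -/
noncomputable def rhoB (Z : Matrix (Fin 2) (Fin 2) ℂ) : Matrix (Fin 2) (Fin 2) ℂ :=
  Z - rhoK Z

/-- `⟨U,V⟩ = 2·Im tr(UV)`, the imaginary part of the Killing form. -/
noncomputable def form (U V : Matrix (Fin 2) (Fin 2) ℂ) : ℝ := 2 * (Matrix.trace (U * V)).im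

lemma diag_inv {x y : ℂ} (h : x * y = 1) :
    (!![x, 0; 0, y] : Matrix (Fin 2) (Fin 2) ℂ)⁻¹ = !![y, 0; 0, x] := by
  apply Matrix.inv_eq_right_inv
  ext i j
  fin_cases i <;> fin_cases j <;> simp [Matrix.mul_apply, Fin.sum_univ_two, h, mul_comm y x]

/-- Evaluation of the Poisson–Lie tensor at `a = diag(e^c, e^{−c})`: with
`X = [[si,u],[−ū,−si]]`, `Y = [[ti,v],[−v̄,−ti]] ∈ 𝔨` one has
`ρ_𝔟(a⁻¹Ya) = (e^{−2c}−e^{2c})vE`, `a·ρ_𝔟(a⁻¹Ya)·a⁻¹ = (1−e^{4c})vE`, and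
`⟨X, a·ρ_𝔟(a⁻¹Ya)·a⁻¹⟩ = 2(e^{4c}−1)Im(ūv)`. -/
theorem stmt15 (s t c : ℝ) (u v : ℂ) :
    let X : Matrix (Fin 2) (Fin 2) ℂ :=
      !![(s : ℂ) * Complex.I, u; -(starRingEnd ℂ) u, -(s : ℂ) * Complex.I]
    let Y : Matrix (Fin 2) (Fin 2) ℂ :=
      !![(t : ℂ) * Complex.I, v; -(starRingEnd ℂ) v, -(t : ℂ) * Complex.I]
    let a : Matrix (Fin 2) (Fin 2) ℂ := !![(Real.exp c : ℂ), 0; 0, (Real.exp (-c) : ℂ)]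
    let E : Matrix (Fin 2) (Fin 2) ℂ := !![0, 1; 0, 0]
    rhoB (a⁻¹ * Y * a) = (((Real.exp (-(2 * c)) - Real.exp (2 * c) : ℝ) : ℂ) * v) • E ∧
    a * rhoB (a⁻¹ * Y * a) * a⁻¹ = (((1 - Real.exp (4 * c) : ℝ) : ℂ) * v) • E ∧
    form X (a * rhoB (a⁻¹ * Y * a) * a⁻¹)
      = 2 * (Real.exp (4 * c) - 1) * ((starRingEnd ℂ) u * v).im := by
  have hxy : Real.exp c * Real.exp (-c) = 1 := by rw [← Real.exp_add]; simp
  have h2 : Real.exp (2 * c) = Real.exp c ^ 2 := by rw [← Real.exp_nat_mul]; norm_num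
  have hn2 : Real.exp (-(2 * c)) = Real.exp (-c) ^ 2 := by
    rw [← Real.exp_nat_mul]; congr 1; push_cast; ring
  have h4 : Real.exp (4 * c) = Real.exp c ^ 4 := by rw [← Real.exp_nat_mul]; norm_num
  rw [h2, hn2, h4]
  clear h2 hn2 h4
  generalize Real.exp c = x at *
  generalize Real.exp (-c) = y at *
  intro X Y a E
  have hxyC : (x : ℂ) * y = 1 := by exact_mod_cast hxy
  have hinv : a⁻¹ = !![(y : ℂ), 0; 0, (x : ℂ)] := diag_inv hxyC
  have hconj : a⁻¹ * Y * a
      = !![(t : ℂ) * Complex.I, (y : ℂ) ^ 2 * v;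
           -((x : ℂ) ^ 2 * (starRingEnd ℂ) v), -(t : ℂ) * Complex.I] := by
    rw [hinv]
    ext i j
    fin_cases i <;> fin_cases j <;> simp [Y, a, Matrix.mul_apply, Fin.sum_univ_two]
    · linear_combination (t * Complex.I) * hxyC
    · ring
    · ring
    · linear_combination (t * Complex.I) * hxyC
  have hB : rhoB (a⁻¹ * Y * a) = (((y ^ 2 - x ^ 2 : ℝ) : ℂ) * v) • E := by
    rw [hconj]
    ext i j
    fin_cases i <;> fin_cases j <;> simp [rhoB, rhoK, E, sub_mul]
  have hA : a * rhoB (a⁻¹ * Y * a) * a⁻¹ = (((1 - x ^ 4 : ℝ) : ℂ) * v) • E := by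
    rw [hB, hinv]
    ext i j
    fin_cases i <;> fin_cases j <;> simp [a, E, Matrix.mul_apply, Fin.sum_univ_two]
    linear_combination v * (x * y + 1) * hxyC
  refine ⟨hB, hA, ?_⟩
  rw [hA]
  simp [form, X, E, Matrix.trace, Fin.sum_univ_two, -Complex.ofReal_pow]
  ring
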